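/- arXiv:0911.0354 — 3 statements merged into one kernel-verified Lean document; each statement's English description precedes it below -/
import Mathlib

section
/- Let W be a finitely generated group admitting a Coxeter generating set. Then Aut(W) contains a subgroup A of finite index such that for every α ∈ A and every Coxeter generating set S of W, the sets S and α(S) are angle-compatible Coxeter generating sets of W. -/
/-- A finite subset `S` of a group `W` is a *Coxeter generating set* if there is a Coxeter
matrix indexed by `S` and a Coxeter system for that matrix on `W` whose simple reflections
are exactly the elements of `S` (via the inclusion `S ⊆ W`). -/
def IsCoxeterGeneratingSet {W : Type*} [Group W] (S : Set W) : Prop :=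
  S.Finite ∧ ∃ (M : CoxeterMatrix ↥S) (cs : CoxeterSystem M W), ∀ s : S, cs.simple s = (s : W)

/-- Two elements are *adjacent* if they generate a finite subgroup. -/
def AdjacentElems {W : Type*} [Group W] (s s' : W) : Prop :=
  (Subgroup.closure {s, s'} : Set W).Finite

/-- Coxeter generating sets `S` and `R` are *angle-compatible* if every pair of elements
of `S` (allowing equal elements) generating a finite subgroup is conjugate to a pair of
elements of `R`. -/
def AngleCompatible {W : Type*} [Group W] (S R : Set W) : Prop :=
  ∀ s ∈ S, ∀ s' ∈ S, (Subgroup.closure {s, s'} : Set W).Finite →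
    ∃ w : W, ∃ r ∈ R, ∃ r' ∈ R, ({w * s * w⁻¹, w * s' * w⁻¹} : Set W) = {r, r'}

/-- `perpIn S J` is the set `J⊥` of elements of `S ∖ J` commuting with every element
of `J`. -/
def perpIn {W : Type*} [Group W] (S J : Set W) : Set W :=
  {t ∈ S \ J | ∀ j ∈ J, Commute t j}

/-- A set is *irreducible* if it cannot be partitioned into two nonempty subsets that
commute elementwise. -/
def IrreducibleSubset {W : Type*} [Group W] (J : Set W) : Prop :=
  ¬ ∃ K L : Set W, K.Nonempty ∧ L.Nonempty ∧ Disjoint K L ∧ K ∪ L = J ∧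
      ∀ k ∈ K, ∀ l ∈ L, Commute k l

/-- A subset `T` is *connected* in the adjacency graph if any two of its elements are
joined by a path inside `T` whose edges are adjacent pairs. -/
def ConnectedIn {W : Type*} [Group W] (T : Set W) : Prop :=
  ∀ a ∈ T, ∀ b ∈ T,
    Relation.ReflTransGen (fun x y => x ∈ T ∧ y ∈ T ∧ AdjacentElems x y) a b

/-- A Coxeter generating set `S` is *twist-rigid* if for every irreducible spherical subset
`J ⊆ S` the set `S ∖ (J ∪ J⊥)` is connected in the adjacency graph. -/
def IsTwistRigid {W : Type*} [Group W] (S : Set W) : Prop :=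
  ∀ J ⊆ S, IrreducibleSubset J → (Subgroup.closure J : Set W).Finite →
    ConnectedIn (S \ (J ∪ perpIn S J))


open CoxeterSystem

set_option linter.unusedSectionVars false

noncomputable section GeomRep

namespace CoxGeom

variable {B : Type*} [Fintype B] [DecidableEq B] (M : CoxeterMatrix B)

/-- The (doubled) Gram matrix. -/
def gram : Matrix B B ℝ := fun i j => -(2 * Real.cos (Real.pi / (M i j : ℝ)))

/-- Simple roots. -/
def al (i : B) : B → ℝ := Pi.single i 1

/-- Simple coroots. -/
def co (i : B) : Module.Dual ℝ (B → ℝ) := (LinearMap.proj i).comp (gram M).mulVecLin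

lemma co_apply (i : B) (v : B → ℝ) : co M i v = (gram M).mulVec v i := rfl

lemma co_al (i j : B) : co M i (al j) = gram M i j := by
  simp [co_apply, al]

lemma gram_diag (i : B) : gram M i i = 2 := by
  simp [gram]

lemma gram_symm (i j : B) : gram M i j = gram M j i := by
  simp [gram, M.symmetric i j]

lemma co_al_self (i : B) : co M i (al i) = 2 := by rw [co_al, gram_diag]

/-- Simple reflections on the geometric representation. -/
def sig (i : B) : (B → ℝ) ≃ₗ[ℝ] (B → ℝ) := Module.reflection (co_al_self M i)

lemma sig_apply (i : B) (v : B → ℝ) : sig M i v = v - co M i v • al i := by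
  simp [sig, Module.reflection_apply]

lemma S_eval_mul_sin (x : ℝ) (n : ℤ) :
    (Polynomial.Chebyshev.S ℝ n).eval (2 * Real.cos x) * Real.sin x = Real.sin ((n + 1) * x) := by
  rw [← Polynomial.Chebyshev.U_real_cos, Polynomial.Chebyshev.S_eq_U_comp_half_mul_X]
  simp

lemma sig_liftable : M.IsLiftable (sig M) := by
  intro i j
  by_cases hij : i = j
  · subst hij
    rw [M.diagonal, pow_one]
    ext1 v
    exact Module.involutive_reflection (co_al_self M i) v
  by_cases h0 : M i j = 0
  · simp [h0]
  have h1 : M i j ≠ 1 := M.off_diagonal i j hij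
  by_cases h2 : M i j = 2
  · have hz : gram M i j = 0 := by simp [gram, h2]
    have hz' : gram M j i = 0 := by rw [gram_symm, hz]
    rw [h2, pow_two]
    ext1 v
    change _ = v
    simp only [LinearEquiv.mul_apply, sig_apply, map_sub, map_smul, co_al, gram_diag, hz, hz',
      smul_eq_mul]
    module
  have hm : 3 ≤ M i j := by omega
  have hmr : (3 : ℝ) ≤ M i j := by exact_mod_cast hm
  set φ : ℝ := 2 * (Real.pi / (M i j : ℝ)) with hφ
  have hmφ : (M i j : ℝ) * φ = 2 * Real.pi := by
    rw [hφ]; field_simp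
  have hsin : Real.sin φ ≠ 0 := by
    apply ne_of_gt
    apply Real.sin_pos_of_pos_of_lt_pi
    · have := Real.pi_pos; positivity
    · have := Real.pi_pos
      by_contra hcon
      nlinarith
  have ht : 2 * Real.cos φ = co M i (al j) * co M j (al i) - 2 := by
    rw [co_al, co_al, gram_symm M j i, gram, hφ, Real.cos_two_mul]; ring
  have hS : ∀ n : ℤ, (Polynomial.Chebyshev.S ℝ n).eval (2 * Real.cos φ)
      = Real.sin ((n + 1) * φ) / Real.sin φ := by
    intro n
    rw [eq_div_iff hsin, S_eval_mul_sin]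
  ext1 v
  unfold sig
  rw [Module.reflection_mul_reflection_pow_apply _ _ (M i j) v _ ht]
  rcases Nat.even_or_odd' (M i j) with ⟨p, hp | hp⟩
  · have e1 : ((M i j : ℤ) - 2) / 2 = p - 1 := by omega
    have e2 : ((M i j : ℤ) - 1) / 2 = p - 1 := by omega
    have hz : (Polynomial.Chebyshev.S ℝ ((p : ℤ) - 1)).eval (2 * Real.cos φ) = 0 := by
      rw [hS]
      have : (((p : ℤ) - 1 : ℤ) + 1 : ℝ) * φ = Real.pi := by
        have : (M i j : ℝ) = 2 * p := by exact_mod_cast hp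
        rw [this] at hmφ
        push_cast
        linarith
      rw [this]; simp
    rw [e1, e2, hz]
    simp
  · have e1 : ((M i j : ℤ) - 2) / 2 = p - 1 := by omega
    have e2 : ((M i j : ℤ) - 1) / 2 = p := by omega
    have e3 : ((M i j : ℤ) - 3) / 2 = p - 1 := by omega
    have e4 : (M i j : ℤ) / 2 = p := by omega
    have hz : (Polynomial.Chebyshev.S ℝ (p : ℤ)).eval (2 * Real.cos φ) +
       (Polynomial.Chebyshev.S ℝ ((p : ℤ) - 1)).eval (2 * Real.cos φ) = 0 := by
      rw [hS, hS]
      have : (((p : ℤ) - 1 : ℤ) + 1 : ℝ) * φ = 2 * Real.pi - (((p : ℤ) : ℝ) + 1) * φ := by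
        have : (M i j : ℝ) = 2 * p + 1 := by exact_mod_cast hp
        rw [this] at hmφ
        push_cast
        linarith
      rw [this, Real.sin_two_pi_sub]; ring
    rw [e1, e2, e3, e4, hz]
    simp

lemma exists_coeff (i j : B) (hij : i ≠ j) : ∃ c : ℕ → ℝ, c 0 = 0 ∧ c 1 = 1 ∧
    (∀ n, c (n + 2) = - gram M i j * c (n + 1) - c n) ∧
    (∀ n, (M i j = 0 ∨ n ≤ M i j) → 0 ≤ c n) := by
  by_cases h0 : M i j = 0
  · refine ⟨fun n => n, by simp, by simp, ?_, fun n _ => by positivity⟩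
    intro n
    simp [gram, h0]
    ring
  have h1 : M i j ≠ 1 := M.off_diagonal i j hij
  have hm : 2 ≤ M i j := by omega
  have hmr : (2 : ℝ) ≤ M i j := by exact_mod_cast hm
  set θ : ℝ := Real.pi / (M i j : ℝ) with hθ
  have hpi := Real.pi_pos
  have hθ0 : 0 < θ := by positivity
  have hmθ : (M i j : ℝ) * θ = Real.pi := by rw [hθ]; field_simp
  have hsin : 0 < Real.sin θ := by
    apply Real.sin_pos_of_pos_of_lt_pi hθ0
    nlinarith
  refine ⟨fun n => Real.sin (n * θ) / Real.sin θ, by simp, by simp [hsin.ne'], ?_, ?_⟩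
  · intro n
    have : gram M i j = -(2 * Real.cos θ) := rfl
    rw [this]
    field_simp
    have e1 : ((n + 2 : ℕ) : ℝ) * θ = ((n + 1 : ℕ) : ℝ) * θ + θ := by push_cast; ring
    have e2 : (n : ℝ) * θ = ((n + 1 : ℕ) : ℝ) * θ - θ := by push_cast; ring
    rw [mul_comm θ, mul_comm θ, e1, e2, Real.sin_add, Real.sin_sub]
    ring
  · rintro n (h | h)
    · exact absurd h h0
    · apply div_nonneg _ hsin.le
      apply Real.sin_nonneg_of_nonneg_of_le_pi
      · positivity
      · rw [← hmθ]
        gcongr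

variable {M} {W : Type*} [Group W] (cs : CoxeterSystem M W)

/-- The geometric representation. -/
def rho : W →* ((B → ℝ) ≃ₗ[ℝ] (B → ℝ)) := cs.lift ⟨sig M, sig_liftable M⟩

lemma rho_simple (i : B) : rho cs (cs.simple i) = sig M i :=
  cs.lift_apply_simple _ i

lemma rho_mul_apply (a b : W) (v : B → ℝ) : rho cs (a * b) v = rho cs a (rho cs b v) := by
  rw [map_mul]; rfl

lemma rho_inv_apply (a : W) (v : B → ℝ) : rho cs a⁻¹ (rho cs a v) = v := by
  rw [← rho_mul_apply]; simp

lemma rho_apply_inv (a : W) (v : B → ℝ) : rho cs a (rho cs a⁻¹ v) = v := by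
  rw [← rho_mul_apply]; simp

lemma sig_al_self (i : B) : sig M i (al i) = - al i := by
  rw [sig_apply, co_al_self]; module

lemma rho_alt (i j : B) (c : ℕ → ℝ) (c0 : c 0 = 0) (c1 : c 1 = 1)
    (hc : ∀ n, c (n + 2) = - gram M i j * c (n + 1) - c n) (k : ℕ) :
    rho cs (cs.wordProd (alternatingWord i j k)) (al i) =
      if Even k then c (k + 1) • al i + c k • al j else c k • al i + c (k + 1) • al j := by
  induction k with
  | zero => simp [alternatingWord, c0, c1]
  | succ k ih =>
    rw [alternatingWord_succ', cs.wordProd_cons, rho_mul_apply, ih, rho_simple, sig_apply]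
    by_cases hk : Even k
    · have hk' : ¬ Even (k + 1) := by simpa [Nat.even_add_one] using hk
      simp only [hk, hk', if_true, if_false, map_add, map_smul, co_al, gram_diag,
        gram_symm M j i, hc, smul_eq_mul]
      module
    · have hk' : Even (k + 1) := by simpa [Nat.even_add_one] using hk
      simp only [hk, hk', if_true, if_false, map_add, map_smul, co_al, gram_diag,
        gram_symm M j i, hc, smul_eq_mul]
      module

theorem pos_of_length (n : ℕ) : ∀ (w : W) (s : B), cs.length w = n →
    cs.length (w * cs.simple s) = cs.length w + 1 → 0 ≤ rho cs w (al s) := by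
  induction n using Nat.strong_induction_on with
  | _ n ih =>
  intro w s hn hs
  by_cases hw : w = 1
  · subst hw
    simp [al]
  obtain ⟨t, ht⟩ := cs.exists_rightDescent_of_ne_one hw
  rw [cs.isRightDescent_iff] at ht
  have hst : s ≠ t := by
    rintro rfl; omega
  let u : ℕ → W := fun k => cs.wordProd (alternatingWord s t k)
  let v : ℕ → W := fun k => w * (u k)⁻¹
  have hvs : ∀ k, v (k + 1) = v k * cs.simple (if Even k then t else s) := by
    intro k
    simp only [v, u]
    rw [alternatingWord_succ', cs.wordProd_cons]
    simp [mul_assoc]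
  have hv0 : v 0 = w := by simp [v, u, alternatingWord]
  have hwv : ∀ k, w = v k * u k := by intro k; simp [v]
  let P : ℕ → Prop := fun k => cs.length (v k) + k = cs.length w
  have hex : ∃ k, ¬ P k := ⟨cs.length w + 1, by simp only [P]; omega⟩
  classical
  obtain ⟨k, hk⟩ : ∃ k, Nat.find hex = k + 2 := by
    have h0 : Nat.find hex ≠ 0 := by
      intro h
      apply Nat.find_spec hex
      rw [h]
      simp [P, hv0]
    have h1 : Nat.find hex ≠ 1 := by
      intro h
      apply Nat.find_spec hex
      rw [h]
      simp only [P]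
      rw [hvs 0, hv0]
      simpa using ht
    exact ⟨Nat.find hex - 2, by omega⟩
  have hP : ∀ j ≤ k + 1, P j := by
    intro j hj
    have := Nat.find_min hex (m := j) (by omega)
    exact not_not.mp this
  have hnP : ¬ P (k + 2) := hk ▸ Nat.find_spec hex
  have hPk1 : cs.length (v (k + 1)) + (k + 1) = cs.length w := hP (k + 1) le_rfl
  have hPk : cs.length (v k) + k = cs.length w := hP k (by omega)
  have hup : cs.length (v (k + 1) * cs.simple (if Even (k + 1) then t else s))
      = cs.length (v (k + 1)) + 1 := by
    rcases cs.length_mul_simple (v (k + 1)) (if Even (k + 1) then t else s) with h | h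
    · exact h
    · exfalso
      apply hnP
      simp only [P]
      rw [hvs (k + 1)]
      omega
  have hup' : cs.length (v (k + 1) * cs.simple (if Even k then t else s))
      = cs.length (v (k + 1)) + 1 := by
    have : v (k + 1) * cs.simple (if Even k then t else s) = v k := by
      rw [hvs k]; simp
    rw [this]; omega
  have hboth : 0 ≤ rho cs (v (k + 1)) (al s) ∧ 0 ≤ rho cs (v (k + 1)) (al t) := by
    have h1 := ih _ (by omega) _ _ rfl hup
    have h2 := ih _ (by omega) _ _ rfl hup'
    by_cases hk : Even k
    · have hk' : ¬ Even (k + 1) := by simpa [Nat.even_add_one] using hk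
      simp only [hk, hk', if_true, if_false] at h1 h2
      exact ⟨h1, h2⟩
    · have hk' : Even (k + 1) := by simpa [Nat.even_add_one] using hk
      simp only [hk, hk', if_true, if_false] at h1 h2
      exact ⟨h2, h1⟩
  have hkM : M s t = 0 ∨ k + 1 + 1 ≤ M s t := by
    by_contra hcon
    push Not at hcon
    obtain ⟨hM0, hMk⟩ := hcon
    have hPM : cs.length (v (M s t)) + M s t = cs.length w := hP _ (by omega)
    have hbr : u (M s t) = cs.wordProd (alternatingWord t s (M s t)) := by
      have := cs.wordProd_braidWord_eq s t
      unfold braidWord at this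
      rw [M.symmetric t s] at this
      exact this
    obtain ⟨m, hm⟩ : ∃ m, M s t = m + 1 := ⟨M s t - 1, by omega⟩
    have : w * cs.simple s = v (M s t) * cs.wordProd (alternatingWord s t m) := by
      conv_lhs => rw [hwv (M s t), hbr]
      rw [hm, alternatingWord_succ, cs.wordProd_concat]
      simp [mul_assoc]
    have h1 := cs.length_mul_le (v (M s t)) (cs.wordProd (alternatingWord s t m))
    have h2 := cs.length_wordProd_le (alternatingWord s t m)
    rw [length_alternatingWord] at h2
    rw [← this] at h1
    omega
  obtain ⟨c, c0, c1, hc, hpos⟩ := exists_coeff M s t hst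
  have hc1 := hpos (k + 1) (by omega)
  have hc2 := hpos (k + 1 + 1) hkM
  rw [hwv (k + 1), rho_mul_apply]
  simp only [u]
  rw [rho_alt cs s t c c0 c1 hc]
  split_ifs
  · rw [map_add, map_smul, map_smul]
    exact add_nonneg (smul_nonneg hc2 hboth.1) (smul_nonneg hc1 hboth.2)
  · rw [map_add, map_smul, map_smul]
    exact add_nonneg (smul_nonneg hc1 hboth.1) (smul_nonneg hc2 hboth.2)

/-- The set of roots. -/
def Phi : Set (B → ℝ) := {β | ∃ w s, β = rho cs w (al s)}

lemma al_mem (s : B) : al s ∈ Phi cs := ⟨1, s, by simp⟩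

lemma al_nonneg (s : B) : (0 : B → ℝ) ≤ al s := by simp [al]

lemma rho_mem {β : B → ℝ} (hβ : β ∈ Phi cs) (w : W) : rho cs w β ∈ Phi cs := by
  obtain ⟨u, s, rfl⟩ := hβ
  exact ⟨w * u, s, by rw [rho_mul_apply]⟩

lemma rho_mul_simple_al (w : W) (s : B) :
    rho cs (w * cs.simple s) (al s) = - rho cs w (al s) := by
  rw [rho_mul_apply, rho_simple, sig_al_self, map_neg]

lemma pos_or_neg {β : B → ℝ} (hβ : β ∈ Phi cs) : 0 ≤ β ∨ β ≤ 0 := by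
  obtain ⟨w, s, rfl⟩ := hβ
  rcases cs.length_mul_simple w s with h | h
  · exact Or.inl (pos_of_length cs _ w s rfl h)
  · right
    have := pos_of_length cs _ (w * cs.simple s) s rfl (by
      rw [cs.simple_mul_simple_cancel_right]; omega)
    rw [rho_mul_simple_al] at this
    exact neg_nonneg.mp this

lemma root_ne_zero {β : B → ℝ} (hβ : β ∈ Phi cs) : β ≠ 0 := by
  obtain ⟨w, s, rfl⟩ := hβ
  rw [ne_eq, LinearEquiv.map_eq_zero_iff]
  simp [al]

/-- The height functional. -/
def ht : (B → ℝ) →ₗ[ℝ] ℝ := ∑ i, LinearMap.proj i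

lemma ht_apply (v : B → ℝ) : ht v = ∑ i, v i := by simp [ht]

lemma ht_pos {β : B → ℝ} (hβ : β ≠ 0) (h : 0 ≤ β) : 0 < ht β := by
  rw [ht_apply]
  apply lt_of_le_of_ne (Finset.sum_nonneg fun i _ => h i)
  intro h0
  apply hβ
  have := (Finset.sum_eq_zero_iff_of_nonneg (fun i _ => h i)).mp h0.symm
  funext i
  exact this i (Finset.mem_univ i)

lemma neg_of_ht {β : B → ℝ} (hβ : β ∈ Phi cs) (h : ht β ≤ 0) : β ≤ 0 := by
  rcases pos_or_neg cs hβ with h' | h'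
  · exact absurd (ht_pos (root_ne_zero cs hβ) h') (not_lt.mpr h)
  · exact h'

lemma not_both {β : B → ℝ} (hβ : β ∈ Phi cs) (h : 0 ≤ β) (hle : β ≤ 0) : False :=
  root_ne_zero cs hβ (le_antisymm hle h)

variable (M) in
/-- The invariant quadratic form. -/
def qf (v : B → ℝ) : ℝ := v ⬝ᵥ (gram M).mulVec v

lemma qf_sig (i : B) (v : B → ℝ) : qf M (sig M i v) = qf M v := by
  have h1 : al i ⬝ᵥ (gram M).mulVec v = co M i v := by
    simp [al, co_apply]
  have h2 : v ⬝ᵥ (gram M).mulVec (al i) = co M i v := by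
    have : (gram M).transpose = gram M := by
      ext a b
      exact gram_symm M b a
    rw [Matrix.dotProduct_mulVec, ← Matrix.mulVec_transpose, this, dotProduct_comm, h1]
  have h3 : al i ⬝ᵥ (gram M).mulVec (al i) = 2 := by
    simp [al, gram_diag]
  unfold qf
  rw [sig_apply]
  simp only [Matrix.mulVec_sub, Matrix.mulVec_smul, sub_dotProduct, dotProduct_sub,
    smul_dotProduct, dotProduct_smul, h1, h2, h3, smul_eq_mul]
  ring

lemma qf_rho (w : W) (v : B → ℝ) : qf M (rho cs w v) = qf M v := by
  induction w using cs.simple_induction_left generalizing v with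
  | one => simp
  | mul_simple_left w i ih => rw [rho_mul_apply, rho_simple, qf_sig, ih]

lemma qf_root {β : B → ℝ} (hβ : β ∈ Phi cs) : qf M β = 2 := by
  obtain ⟨w, s, rfl⟩ := hβ
  rw [qf_rho]
  simp [qf, al, gram_diag]

lemma eq_al {β : B → ℝ} (hβ : β ∈ Phi cs) (h : 0 ≤ β) (i : B) (h' : sig M i β ≤ 0) :
    β = al i := by
  have hc : ∀ j, j ≠ i → β j = 0 := by
    intro j hj
    have := h' j
    rw [sig_apply] at this
    simp [al, Pi.single_apply, hj] at this
    exact le_antisymm this (h j)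
  have hb : β = β i • al i := by
    funext j
    by_cases hj : j = i
    · subst hj; simp [al]
    · simp [al, Pi.single_apply, hj, hc j hj]
  have hq := qf_root cs hβ
  rw [hb] at hq
  have : qf M (β i • al i) = β i * β i * 2 := by
    simp [qf, al, Matrix.mulVec_smul, gram_diag, mul_assoc]
  rw [this] at hq
  have hi : (0 : ℝ) ≤ β i := h i
  have : β i = 1 := by nlinarith
  rw [hb, this, one_smul]

/-- Inversion set. -/
def inv (w : W) : Set (B → ℝ) := {β | β ∈ Phi cs ∧ 0 ≤ β ∧ rho cs w β ≤ 0}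

lemma inv_finite (w : W) : (inv cs w).Finite := by
  induction w using cs.simple_induction_left with
  | one =>
    convert Set.finite_empty
    ext β
    simp only [inv, Set.mem_ofPred_eq, Set.mem_empty_iff_false, iff_false]
    rintro ⟨h1, h2, h3⟩
    exact not_both cs h1 h2 (by simpa using h3)
  | mul_simple_left w i ih =>
    apply (ih.insert (rho cs w⁻¹ (al i))).subset
    rintro β ⟨h1, h2, h3⟩
    rw [rho_mul_apply, rho_simple] at h3
    rcases pos_or_neg cs (rho_mem cs h1 w) with h | h
    · left
      rw [← eq_al cs (rho_mem cs h1 w) h i h3, rho_inv_apply]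
    · right
      exact ⟨h1, h2, h⟩

lemma neg_mem {β : B → ℝ} (hβ : β ∈ Phi cs) : -β ∈ Phi cs := by
  obtain ⟨w, s, rfl⟩ := hβ
  exact ⟨w * cs.simple s, s, (rho_mul_simple_al cs w s).symm⟩

lemma eq_one_of_pos (u : W) (h : ∀ s, 0 ≤ rho cs u (al s)) : u = 1 := by
  by_contra hu
  obtain ⟨s, hs⟩ := cs.exists_rightDescent_of_ne_one hu
  rw [cs.isRightDescent_iff] at hs
  have := pos_of_length cs _ (u * cs.simple s) s rfl (by
      rw [cs.simple_mul_simple_cancel_right]; omega)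
  rw [rho_mul_simple_al] at this
  exact not_both cs ⟨u, s, rfl⟩ (h s) (neg_nonneg.mp this)

lemma inv_injective : Function.Injective (inv cs) := by
  intro g h hgh
  rw [← mul_inv_eq_one]
  apply eq_one_of_pos cs
  intro s
  rw [rho_mul_apply]
  have hm : rho cs h⁻¹ (al s) ∈ Phi cs := ⟨h⁻¹, s, rfl⟩
  rcases pos_or_neg cs hm with hp | hp
  · rcases pos_or_neg cs (rho_mem cs hm g) with h' | h'
    · exact h'
    · exfalso
      have : rho cs h⁻¹ (al s) ∈ inv cs g := ⟨hm, hp, h'⟩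
      rw [hgh] at this
      have h3 := this.2.2
      rw [rho_apply_inv] at h3
      exact not_both cs (al_mem cs s) (al_nonneg s) h3
  · have : - rho cs h⁻¹ (al s) ∈ inv cs h := by
      refine ⟨neg_mem cs hm, neg_nonneg.mpr hp, ?_⟩
      rw [map_neg, rho_apply_inv]
      exact neg_nonpos.mpr (al_nonneg s)
    rw [← hgh] at this
    have h3 := this.2.2
    rw [map_neg] at h3
    exact neg_nonpos.mp h3

/-- Positive roots with support in `J`. -/
def PhiJ (J : Set B) : Set (B → ℝ) := {β | β ∈ Phi cs ∧ 0 ≤ β ∧ ∀ i ∉ J, β i = 0}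

/-- The finite set into which all finite subgroups can be conjugated. -/
def K : Set W := {g | ∃ J : Set B, (PhiJ cs J).Finite ∧ inv cs g ⊆ PhiJ cs J}

lemma K_finite : (K cs).Finite := by
  have : K cs = ⋃ J ∈ {J : Set B | (PhiJ cs J).Finite}, (inv cs) ⁻¹' (𝒫 (PhiJ cs J)) := by
    ext g
    simp [K]
  rw [this]
  apply Set.Finite.biUnion (Set.toFinite _)
  intro J hJ
  exact Set.Finite.preimage (inv_injective cs).injOn (Set.Finite.finite_subsets hJ)

lemma functional_eq (y : (B → ℝ) →ₗ[ℝ] ℝ) (v : B → ℝ) : y v = ∑ i, v i * y (al i) := by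
  conv_lhs => rw [← Finset.univ_sum_single v]
  rw [map_sum]
  apply Finset.sum_congr rfl
  intro i _
  rw [← smul_eq_mul, ← map_smul]
  congr 1
  funext j
  simp [al, Pi.single_apply]

theorem exists_conj_subset (G : Subgroup W) (hG : (G : Set W).Finite) :
    ∃ w : W, ∀ g ∈ G, w⁻¹ * g * w ∈ K cs := by
  classical
  have : Finite G := hG
  have : Fintype G := Fintype.ofFinite G
  let y : (B → ℝ) →ₗ[ℝ] ℝ := ∑ g : G, ht.comp (rho cs (g : W)).toLinearMap
  have hy : ∀ v, y v = ∑ g : G, ht (rho cs (g : W) v) := by intro v; simp [y]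
  have hyG : ∀ g ∈ G, ∀ v, y (rho cs g v) = y v := by
    intro g hg v
    rw [hy, hy]
    exact Fintype.sum_equiv (Equiv.mulRight (⟨g, hg⟩ : G)) _ _ (fun h => by
      rw [← rho_mul_apply]; rfl)
  have hneg : ∀ (w : W) (β : B → ℝ), β ∈ Phi cs → 0 ≤ β → y (rho cs w β) ≤ 0 →
      β ∈ ⋃ g : G, inv cs (g * w) := by
    intro w β hβ h0 hle
    rw [hy] at hle
    by_contra hcon
    simp only [Set.mem_iUnion, not_exists] at hcon
    have : 0 < ∑ g : G, ht (rho cs (g : W) (rho cs w β)) := by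
      apply Finset.sum_pos
      · intro g _
        by_contra hlt
        apply hcon g
        refine ⟨hβ, h0, ?_⟩
        rw [rho_mul_apply]
        exact neg_of_ht cs (rho_mem cs (rho_mem cs hβ _) _) (not_lt.mp hlt)
      · exact ⟨1, Finset.mem_univ _⟩
    linarith
  have hfin : ∀ w : W, (⋃ g : G, inv cs (g * w)).Finite :=
    fun w => Set.finite_iUnion fun g => inv_finite cs _
  let N : W → Set (B → ℝ) := fun w => {β | β ∈ Phi cs ∧ 0 ≤ β ∧ y (rho cs w β) < 0}
  have hN : ∀ w, (N w).Finite := fun w =>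
    (hfin w).subset fun β hβ => hneg w β hβ.1 hβ.2.1 hβ.2.2.le
  obtain ⟨w, hw⟩ : ∃ w, ∀ w', (N w).ncard ≤ (N w').ncard := by
    have hne : (Set.range fun w => (N w).ncard).Nonempty := Set.range_nonempty _
    obtain ⟨w, hw⟩ := Nat.sInf_mem hne
    refine ⟨w, fun w' => ?_⟩
    have h := Nat.sInf_le (Set.mem_range_self (f := fun w => (N w).ncard) w')
    rw [← hw] at h
    exact h
  have hdom : ∀ s, 0 ≤ y (rho cs w (al s)) := by
    intro s
    by_contra hlt
    push Not at hlt
    have hmem : al s ∈ N w := ⟨al_mem cs s, al_nonneg s, hlt⟩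
    have himg : (sig M s) '' (N (w * cs.simple s)) ⊆ N w \ {al s} := by
      rintro _ ⟨β, ⟨h1, h2, h3⟩, rfl⟩
      rw [rho_mul_apply, rho_simple] at h3
      have hβ : β ≠ al s := by
        rintro rfl
        rw [sig_al_self, map_neg, map_neg] at h3
        linarith
      have hr : sig M s β ∈ Phi cs := by
        rw [← rho_simple cs]; exact rho_mem cs h1 _
      have hp : 0 ≤ sig M s β := by
        rcases pos_or_neg cs hr with h | h
        · exact h
        · exact absurd (eq_al cs h1 h2 s h) hβ
      refine ⟨⟨hr, hp, h3⟩, ?_⟩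
      intro heq
      rw [Set.mem_singleton_iff] at heq
      have : β = - al s := by
        rw [← sig_al_self (M := M), ← heq]
        exact (Module.involutive_reflection (co_al_self M s) β).symm
      rw [this] at h2
      exact not_both cs (al_mem cs s) (al_nonneg s) (neg_nonneg.mp h2)
    have h1 := Set.ncard_le_ncard himg ((hN w).sdiff)
    rw [Set.ncard_image_of_injective _ (sig M s).injective] at h1
    have h2 := Set.ncard_sdiff_singleton_lt_of_mem hmem (hN w)
    have h3 := hw (w * cs.simple s)
    omega
  let y' : (B → ℝ) →ₗ[ℝ] ℝ := y.comp (rho cs w).toLinearMap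
  have hy' : ∀ v, y' v = y (rho cs w v) := fun v => rfl
  have hnn : ∀ v : B → ℝ, 0 ≤ v → 0 ≤ y' v := by
    intro v hv
    rw [functional_eq]
    exact Finset.sum_nonneg fun i _ => mul_nonneg (hv i) (hdom i)
  refine ⟨w, fun g hg => ⟨{s | y' (al s) = 0}, ?_, ?_⟩⟩
  · apply (hfin w).subset
    rintro β ⟨h1, h2, h3⟩
    apply hneg w β h1 h2
    rw [← hy', functional_eq]
    apply le_of_eq
    apply Finset.sum_eq_zero
    intro i _
    by_cases hi : y' (al i) = 0
    · rw [hi, mul_zero]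
    · rw [h3 i hi, zero_mul]
  · rintro β ⟨h1, h2, h3⟩
    refine ⟨h1, h2, ?_⟩
    have e : y' (rho cs (w⁻¹ * g * w) β) = y' β := by
      rw [hy', hy', ← rho_mul_apply]
      have : w * (w⁻¹ * g * w) = g * w := by group
      rw [this, rho_mul_apply, hyG g hg]
    have h4 := hnn _ (neg_nonneg.mpr h3)
    rw [map_neg, e] at h4
    have h5 := hnn _ h2
    have h6 : y' β = 0 := by linarith
    rw [functional_eq] at h6
    have h7 := (Finset.sum_eq_zero_iff_of_nonneg
      (fun i _ => mul_nonneg (h2 i) (hdom i))).mp h6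
    intro i hi
    rcases mul_eq_zero.mp (h7 i (Finset.mem_univ i)) with h | h
    · exact h
    · exact absurd h hi

end CoxGeom

end GeomRep

namespace CoxPairs

variable (W : Type*) [Group W]

/-- Pairs generating a finite subgroup. -/
def P : Type _ := {p : W × W // (Subgroup.closure {p.1, p.2} : Set W).Finite}

/-- Simultaneous conjugacy of pairs. -/
def conjSetoid : Setoid (P W) where
  r p q := ∃ w : W, w * p.1.1 * w⁻¹ = q.1.1 ∧ w * p.1.2 * w⁻¹ = q.1.2
  iseqv := by
    refine ⟨fun p => ⟨1, by simp⟩, ?_, ?_⟩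
    · rintro p q ⟨w, h1, h2⟩
      exact ⟨w⁻¹, by rw [← h1]; group, by rw [← h2]; group⟩
    · rintro p q r ⟨w, h1, h2⟩ ⟨v, h3, h4⟩
      exact ⟨v * w, by rw [← h3, ← h1]; group, by rw [← h4, ← h2]; group⟩

/-- Conjugacy classes of pairs generating a finite subgroup. -/
def Q : Type _ := Quotient (conjSetoid W)

variable {W}

/-- The class of a pair. -/
def mkQ (p : P W) : Q W := Quotient.mk (conjSetoid W) p

lemma map_finite (α : MulAut W) {a b : W} (h : (Subgroup.closure {a, b} : Set W).Finite) :
    (Subgroup.closure {α a, α b} : Set W).Finite := by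
  have : Subgroup.closure {α a, α b} = (Subgroup.closure {a, b}).map (α : W ≃* W).toMonoidHom := by
    rw [MonoidHom.map_closure, Set.image_pair]; rfl
  rw [this, Subgroup.coe_map]
  exact h.image _

/-- Automorphisms act on pairs. -/
def act (α : MulAut W) (p : P W) : P W := ⟨(α p.1.1, α p.1.2), map_finite α p.2⟩

instance : MulAction (MulAut W) (Q W) where
  smul α q := Quotient.map' (s₁ := conjSetoid W) (s₂ := conjSetoid W) (act α) (by
    rintro p q ⟨w, h1, h2⟩
    refine ⟨α w, ?_, ?_⟩
    · simp only [act, ← h1]; simp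
    · simp only [act, ← h2]; simp) q
  one_smul q := by
    induction q using Quotient.inductionOn'
    rfl
  mul_smul α β q := by
    induction q using Quotient.inductionOn'
    rfl

lemma smul_mk (α : MulAut W) (p : P W) :
    α • mkQ p = mkQ (act α p) := rfl

lemma finite_Q (K : Set W) (hK : K.Finite)
    (h : ∀ G : Subgroup W, (G : Set W).Finite → ∃ w : W, ∀ g ∈ G, w⁻¹ * g * w ∈ K) :
    Finite (Q W) := by
  have hF : {p : P W | p.1.1 ∈ K ∧ p.1.2 ∈ K}.Finite :=
    Set.Finite.preimage (f := fun p : P W => p.1) Subtype.val_injective.injOn (hK.prod hK)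
  have : Finite {p : P W | p.1.1 ∈ K ∧ p.1.2 ∈ K} := hF
  apply Finite.of_surjective
    (fun p : {p : P W | p.1.1 ∈ K ∧ p.1.2 ∈ K} => (Quotient.mk (conjSetoid W) p.1 : Q W))
  intro q
  induction q using Quotient.inductionOn' with
  | h p =>
  obtain ⟨w, hw⟩ := h _ p.2
  have h1 := hw p.1.1 (Subgroup.subset_closure (by simp))
  have h2 := hw p.1.2 (Subgroup.subset_closure (by simp))
  have hfin := map_finite (MulAut.conj w⁻¹) p.2
  refine ⟨⟨⟨(w⁻¹ * p.1.1 * w, w⁻¹ * p.1.2 * w), by simpa using hfin⟩, h1, h2⟩, ?_⟩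
  apply Quotient.sound
  exact ⟨w, by simp [mul_assoc], by simp [mul_assoc]⟩

end CoxPairs

lemma isCoxeterGeneratingSet_image {W : Type*} [Group W] (α : W ≃* W) {S : Set W}
    (hS : IsCoxeterGeneratingSet S) : IsCoxeterGeneratingSet (α '' S) := by
  obtain ⟨hf, M, cs, h⟩ := hS
  let e : S ≃ (α '' S) := α.toEquiv.image S
  refine ⟨hf.image _, M.reindex e, (cs.map α).reindex e, ?_⟩
  intro s
  obtain ⟨t, rfl⟩ := e.surjective s
  rw [CoxeterSystem.reindex_simple, CoxeterSystem.map_simple, Equiv.symm_apply_apply, h]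
  rfl

/-- The automorphism group of a Coxeter group contains a finite index
subgroup all of whose elements map every Coxeter generating set to an angle-compatible
Coxeter generating set. -/
theorem exists_finite_index_angle_compatible_subgroup
    {W : Type*} [Group W] (hW : ∃ S : Set W, IsCoxeterGeneratingSet S) :
    ∃ A : Subgroup (MulAut W), A.FiniteIndex ∧
      ∀ α ∈ A, ∀ S : Set W, IsCoxeterGeneratingSet S →
        IsCoxeterGeneratingSet ((α : W ≃* W) '' S) ∧
        AngleCompatible S ((α : W ≃* W) '' S) := by
  obtain ⟨S₀, hf, M, cs, -⟩ := hW
  classical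
  have : Finite S₀ := hf
  have : Fintype S₀ := Fintype.ofFinite S₀
  have : Finite (CoxPairs.Q W) :=
    CoxPairs.finite_Q (CoxGeom.K cs) (CoxGeom.K_finite cs) (CoxGeom.exists_conj_subset cs)
  refine ⟨(MulAction.toPermHom (MulAut W) (CoxPairs.Q W)).ker, inferInstance, ?_⟩
  intro α hα S hS
  refine ⟨isCoxeterGeneratingSet_image α hS, ?_⟩
  intro s hs s' hs' hfin
  let p : CoxPairs.P W := ⟨(s, s'), hfin⟩
  have h1 : α • CoxPairs.mkQ p = CoxPairs.mkQ p := by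
    have := MonoidHom.mem_ker.mp hα
    exact congrArg (fun f : Equiv.Perm (CoxPairs.Q W) =>
      f (CoxPairs.mkQ p)) this
  rw [CoxPairs.smul_mk] at h1
  obtain ⟨w, hw1, hw2⟩ := Quotient.exact h1.symm
  refine ⟨w, α s, ⟨s, hs, rfl⟩, α s', ⟨s', hs', rfl⟩, ?_⟩
  have e1 : w * s * w⁻¹ = α s := hw1
  have e2 : w * s' * w⁻¹ = α s' := hw2
  rw [e1, e2]
end

section
/- Let S and R be Coxeter generating sets of a group W. If every element of S is conjugate in W to some element of R, then every element of R is conjugate in W to some element of S. -/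
/-- Two involutions whose product has odd order are conjugate. -/
theorem isConj_of_odd_pow {W : Type*} [Group W] (a b : W) (ha : a * a = 1) (hb : b * b = 1)
    (k : ℕ) (hk : (a * b) ^ (2 * k + 1) = 1) : IsConj a b := by
  have hai : a⁻¹ = a := inv_eq_of_mul_eq_one_left ha
  have hbi : b⁻¹ = b := inv_eq_of_mul_eq_one_left hb
  rw [isConj_iff]
  refine ⟨(a * b) ^ k, ?_⟩
  have h1 : a * ((a * b) ^ k)⁻¹ * a⁻¹ = (a * b) ^ k := by
    rw [← inv_pow, ← conj_pow]
    congr 1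
    rw [mul_inv_rev, hai, hbi, mul_assoc, mul_assoc, ha, mul_one]
  have h2 : a * ((a * b) ^ k)⁻¹ = (a * b) ^ k * a :=
    mul_inv_eq_iff_eq_mul.1 h1
  have h3 : (a * b) ^ k * (a * b) ^ k = b * a := by
    have : (a * b) ^ k * (a * b) ^ k * (a * b) = 1 := by
      rw [← hk, ← pow_add, ← pow_succ, two_mul]
    rw [eq_inv_of_mul_eq_one_left this, mul_inv_rev, hai, hbi]
  rw [mul_assoc, h2, ← mul_assoc, h3, mul_assoc, ha, mul_one]

/-- Reflection-compatibility of Coxeter generating sets is symmetric. -/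
theorem reflection_compatibility_symm
    {W : Type*} [Group W] (S R : Set W)
    (hS : IsCoxeterGeneratingSet S) (hR : IsCoxeterGeneratingSet R)
    (h : ∀ s ∈ S, ∃ w : W, ∃ r ∈ R, w * s * w⁻¹ = r) :
    ∀ r ∈ R, ∃ w : W, ∃ s ∈ S, w * r * w⁻¹ = s := by
  classical
  obtain ⟨-, MS, csS, hsS⟩ := hS
  obtain ⟨-, MR, csR, hsR⟩ := hR
  intro r hr
  by_contra hcon
  have hno : ∀ s ∈ S, ¬ IsConj s r := by
    intro s hs hc
    obtain ⟨w, hw⟩ := isConj_iff.1 hc.symm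
    exact hcon ⟨w, s, hs, hw⟩
  let f : R → ℤˣ := fun i => if IsConj (i : W) r then -1 else 1
  have hf : MR.IsLiftable f := by
    intro i j
    rcases Nat.even_or_odd' (MR i j) with ⟨k, hk | hk⟩
    · rw [hk, pow_mul, Int.units_sq, one_pow]
    · have hc : IsConj (i : W) (j : W) := by
        apply isConj_of_odd_pow _ _ _ _ k
        · rw [← hk, ← hsR i, ← hsR j]; exact csR.simple_mul_simple_pow i j
        · rw [← hsR i]; exact csR.simple_mul_simple_self i
        · rw [← hsR j]; exact csR.simple_mul_simple_self j
      have hij : f i = f j := by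
        have : IsConj (i : W) r ↔ IsConj (j : W) r :=
          ⟨fun h => hc.symm.trans h, fun h => hc.trans h⟩
        simp only [f, this]
      rw [hij, Int.units_mul_self, one_pow]
  let φ : W →* ℤˣ := csR.lift ⟨f, hf⟩
  have hφ : ∀ i : R, φ (i : W) = f i := by
    intro i
    rw [← hsR i]
    exact csR.lift_apply_simple hf i
  have htriv : φ = 1 := by
    apply csS.ext_simple
    intro s
    rw [hsS s, MonoidHom.one_apply]
    obtain ⟨w, r', hr', hw⟩ := h s s.2
    have h1 : φ s = φ r' := by
      rw [← hw, map_mul, map_mul, map_inv, mul_comm (φ w), mul_inv_cancel_right]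
    have h2 : ¬ IsConj r' r := fun hc =>
      hno s s.2 ((isConj_iff.2 ⟨w, hw⟩).trans hc)
    rw [h1, hφ ⟨r', hr'⟩]
    simp only [f, if_neg h2]
  have hval := hφ ⟨r, hr⟩
  rw [htriv] at hval
  simp only [f, if_pos (IsConj.refl r), MonoidHom.one_apply] at hval
  exact absurd hval (by decide)
end

section
/- Let S and R be Coxeter generating sets of a group W. Suppose that for all s, s' ∈ S generating a finite subgroup (allowing s = s') there exist w ∈ W and r, r' ∈ R with {wsw⁻¹, ws'w⁻¹} = {r, r'}. Then for all r, r' ∈ R generating a finite subgroup there exist u ∈ W and s, s' ∈ S with {uru⁻¹, ur'u⁻¹} = {s, s'}. -/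
namespace AngleSymm

open CoxeterSystem

section Cocycle

variable {B W : Type*} [Group W] {M : CoxeterMatrix B} (cs : CoxeterSystem M W)

open Classical in
/-- The reflection action of a simple generator on `W × ZMod 2`. -/
noncomputable def act (i : B) : Function.End (W × ZMod 2) := fun p =>
  (cs.simple i * p.1 * cs.simple i, p.2 + if p.1 = cs.simple i then 1 else 0)

open Classical in
lemma act_mul_pow (i j : B) (n : ℕ) (x : W) (e : ZMod 2) :
    ((act cs i * act cs j) ^ n) (x, e) =
      ((cs.simple i * cs.simple j) ^ n * x * ((cs.simple i * cs.simple j) ^ n)⁻¹,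
        e + ∑ l ∈ Finset.range (2 * n),
          if x = cs.simple j * (cs.simple i * cs.simple j) ^ l then 1 else 0) := by
  induction n with
  | zero => simp; rfl
  | succ n ih =>
    have hc : ∀ k : ℕ, ((cs.simple i * cs.simple j) ^ k)⁻¹ * cs.simple j
        = cs.simple j * (cs.simple i * cs.simple j) ^ k := by
      intro k
      induction k with
      | zero => simp
      | succ k ihk =>
        rw [pow_succ, mul_inv_rev, mul_assoc, ihk, pow_mul_comm']
        simp [mul_assoc]
    set c := cs.simple i * cs.simple j with hcdef
    have hsplit : ((act cs i * act cs j) ^ (n + 1)) (x, e) =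
        act cs i (act cs j (((act cs i * act cs j) ^ n) (x, e))) := by
      rw [pow_succ']; rfl
    rw [hsplit, ih]
    have h1 : (c ^ n * x * (c ^ n)⁻¹ = cs.simple j) ↔ x = cs.simple j * c ^ (2 * n) := by
      rw [two_mul, pow_add, ← mul_assoc, ← hc, mul_inv_eq_iff_eq_mul, mul_assoc,
        eq_inv_mul_iff_mul_eq]
    have h2 : (cs.simple j * (c ^ n * x * (c ^ n)⁻¹) * cs.simple j = cs.simple i) ↔
        x = cs.simple j * c ^ (2 * n + 1) := by
      have e1 : ∀ y : W, cs.simple j * y * cs.simple j = cs.simple i ↔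
          y = cs.simple j * c := by
        intro y
        rw [hcdef]
        constructor
        · intro h
          rw [← h]; simp [mul_assoc]
        · intro h
          rw [h]; simp [mul_assoc]
      have e2 : cs.simple j * c ^ (2 * n + 1) = (c ^ n)⁻¹ * (cs.simple j * c * c ^ n) := by
        rw [show 2 * n + 1 = n + (1 + n) by ring, pow_add, pow_add, pow_one, ← mul_assoc, ← hc]
        simp only [mul_assoc]
      rw [e1, e2, mul_inv_eq_iff_eq_mul, eq_inv_mul_iff_mul_eq]
    simp only [act, h1, h2]
    refine Prod.ext ?_ ?_
    · simp [pow_succ', hcdef, mul_assoc]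
    · rw [show 2 * (n + 1) = 2 * n + 1 + 1 by ring, Finset.sum_range_succ, Finset.sum_range_succ]
      simp only [add_assoc]

lemma act_liftable : M.IsLiftable (act cs) := by
  classical
  intro i j
  funext ⟨x, e⟩
  rw [act_mul_pow, two_mul, Finset.sum_range_add]
  simp only [pow_add, cs.simple_mul_simple_pow, one_mul]
  rw [CharTwo.add_self_eq_zero]
  simp; rfl

/-- The action of `W` on `W × ZMod 2`. -/
noncomputable def actHom : W →* Function.End (W × ZMod 2) := cs.lift ⟨act cs, act_liftable cs⟩

/-- The separation cocycle: `eta w t` is the parity of the number of crossings of the wall of `t`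
by a gallery from `1` to `w`. -/
noncomputable def eta (w t : W) : ZMod 2 := (actHom cs w⁻¹ (t, 0)).2

lemma actHom_apply (w x : W) (e : ZMod 2) :
    actHom cs w (x, e) = (w * x * w⁻¹, e + eta cs w⁻¹ x) := by
  unfold eta
  rw [inv_inv]
  refine cs.simple_induction_left (p := fun w => ∀ x e, actHom cs w (x, e) =
    (w * x * w⁻¹, e + (actHom cs w (x, 0)).2)) w ?_ ?_ x e
  · intro x e
    simp [Function.End.one_def]
  · intro w i ih x e
    have h : ∀ e, actHom cs (cs.simple i * w) (x, e) = act cs i (actHom cs w (x, e)) := by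
      intro e
      rw [map_mul, actHom, lift_apply_simple]; rfl
    rw [h, h, ih, ih x 0]
    simp [act, mul_assoc, add_assoc]

lemma eta_mul (u v t : W) : eta cs (u * v) t = eta cs u t + eta cs v (u⁻¹ * t * u) := by
  have : actHom cs (u * v)⁻¹ (t, 0) = actHom cs v⁻¹ (actHom cs u⁻¹ (t, 0)) := by
    rw [mul_inv_rev, map_mul]; rfl
  rw [eta, this, actHom_apply cs u⁻¹, actHom_apply cs v⁻¹]
  simp

lemma eta_one (t : W) : eta cs 1 t = 0 := by
  have := eta_mul cs 1 1 t
  simpa using this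

open Classical in
lemma eta_simple (i : B) (t : W) : eta cs (cs.simple i) t = if t = cs.simple i then 1 else 0 := by
  rw [eta, inv_simple, actHom, lift_apply_simple]
  simp [act]

open Classical in
lemma eta_mul_simple (w : W) (i : B) (t : W) :
    eta cs (w * cs.simple i) t =
      eta cs w t + if t = w * cs.simple i * w⁻¹ then 1 else 0 := by
  rw [eta_mul, eta_simple]
  congr 2
  rw [eq_iff_iff]
  constructor
  · intro h; rw [← h]; group
  · intro h; rw [h]; group

lemma eta_mul_simple_ne {w : W} {i : B} {t : W}
    (h : eta cs (w * cs.simple i) t ≠ eta cs w t) : t = w * cs.simple i * w⁻¹ := by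
  by_contra h'
  rw [eta_mul_simple, if_neg h', add_zero] at h
  exact h rfl

lemma eta_inv (w t : W) : eta cs w⁻¹ t = eta cs w (w * t * w⁻¹) := by
  have := eta_mul cs w w⁻¹ (w * t * w⁻¹)
  rw [mul_inv_cancel, eta_one] at this
  rw [show w⁻¹ * (w * t * w⁻¹) * w = t by group] at this
  rw [← CharTwo.add_eq_zero, add_comm, ← this]

lemma eta_self {t : W} (ht : cs.IsReflection t) : eta cs t t = 1 := by
  obtain ⟨u, i, rfl⟩ := ht
  rw [eta_mul, eta_mul, eta_simple, eta_inv]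
  rw [if_pos (by group)]
  rw [show u * ((u * cs.simple i)⁻¹ * (u * cs.simple i * u⁻¹) * (u * cs.simple i)) * u⁻¹
    = u * cs.simple i * u⁻¹ by group]
  rw [add_right_comm, CharTwo.add_self_eq_zero, zero_add]

lemma eta_refl_mul {t : W} (ht : cs.IsReflection t) (w : W) :
    eta cs (t * w) t = eta cs w t + 1 := by
  rw [eta_mul, eta_self cs ht, inv_mul_cancel, one_mul, add_comm]

open Classical in
lemma eta_wordProd (ω : List B) (t : W) :
    eta cs (cs.wordProd ω) t = ((cs.leftInvSeq ω).count t : ZMod 2) := by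
  induction ω using List.reverseRecOn with
  | nil => simp [eta_one]
  | append_singleton ω i ih =>
    rw [← List.concat_eq_append, wordProd_concat, leftInvSeq_concat, eta_mul_simple, ih,
      List.concat_eq_append, List.count_append, List.count_singleton]
    push_cast
    congr 1
    by_cases hh : t = cs.wordProd ω * cs.simple i * (cs.wordProd ω)⁻¹
    · rw [if_pos hh, if_pos (by rw [hh]; exact beq_self_eq_true _)]
    · rw [if_neg hh, if_neg (by rw [beq_iff_eq]; exact fun h => hh h.symm)]

/-- The exchange property. -/
lemma exchange (ω : List B) (i : B)
    (h : cs.length (cs.wordProd ω * cs.simple i) < cs.length (cs.wordProd ω)) :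
    ∃ j, j < ω.length ∧ cs.wordProd ω * cs.simple i = cs.wordProd (ω.eraseIdx j) := by
  classical
  obtain ⟨τ, hτ, hτw⟩ := cs.exists_isReduced (cs.wordProd ω * cs.simple i)
  set w := cs.wordProd ω with hw
  have hprod : cs.wordProd (τ.concat i) = w := by
    rw [wordProd_concat, ← hτw]; simp
  have hred : cs.IsReduced (τ.concat i) := by
    have h1 := cs.length_wordProd_le (τ.concat i)
    have h2 := hτ.eq
    rw [← hτw] at h2
    rw [CoxeterSystem.IsReduced]
    rw [hprod] at h1 ⊢
    simp only [List.length_concat] at h1 ⊢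
    omega
  have hnd := IsReduced.nodup_leftInvSeq cs hred
  have hmem : w * cs.simple i * w⁻¹ ∈ cs.leftInvSeq (τ.concat i) := by
    rw [leftInvSeq_concat, ← hτw]
    simp [mul_assoc]
  have hcount := eta_wordProd cs (τ.concat i) (w * cs.simple i * w⁻¹)
  rw [List.count_eq_one_of_mem hnd hmem, hprod, hw, eta_wordProd] at hcount
  have hmem2 : w * cs.simple i * w⁻¹ ∈ cs.leftInvSeq ω := by
    by_contra hn
    rw [hw] at hn
    rw [List.count_eq_zero_of_not_mem hn] at hcount
    simp at hcount
  obtain ⟨j, hj, hje⟩ := List.getElem_of_mem hmem2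
  refine ⟨j, by simpa using hj, ?_⟩
  rw [← getD_leftInvSeq_mul_wordProd, List.getD_eq_getElem _ _ hj, hje, ← hw]
  group

end Cocycle

section Parabolic

variable {B W : Type*} [Group W] {M : CoxeterMatrix B} (cs : CoxeterSystem M W)

/-- The standard parabolic subgroup of type `K`. -/
def par (K : Set B) : Subgroup W := Subgroup.closure (cs.simple '' K)

lemma simple_mem_par {K : Set B} {k : B} (hk : k ∈ K) : cs.simple k ∈ par cs K :=
  Subgroup.subset_closure ⟨k, hk, rfl⟩

lemma wordProd_mem_par {K : Set B} {κ : List B} (hκ : ∀ k ∈ κ, k ∈ K) :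
    cs.wordProd κ ∈ par cs K := by
  induction κ with
  | nil => simp [one_mem]
  | cons k κ ih =>
    rw [wordProd_cons]
    exact mul_mem (simple_mem_par cs (hκ k (by simp))) (ih fun a ha => hκ a (by simp [ha]))

lemma exists_word_of_mem_par {K : Set B} {x : W} (hx : x ∈ par cs K) :
    ∃ κ : List B, (∀ k ∈ κ, k ∈ K) ∧ cs.wordProd κ = x := by
  refine Subgroup.closure_induction
    (p := fun x _ => ∃ κ : List B, (∀ k ∈ κ, k ∈ K) ∧ cs.wordProd κ = x) ?_ ?_ ?_ ?_ hx
  · rintro _ ⟨k, hk, rfl⟩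
    exact ⟨[k], by simpa using hk, by simp⟩
  · exact ⟨[], by simp, by simp⟩
  · rintro _ _ _ _ ⟨κ, h, rfl⟩ ⟨κ', h', rfl⟩
    refine ⟨κ ++ κ', ?_, by rw [wordProd_append]⟩
    intro k hk
    rcases List.mem_append.1 hk with hk | hk
    · exact h k hk
    · exact h' k hk
  · rintro _ _ ⟨κ, h, rfl⟩
    exact ⟨κ.reverse, by simpa using h, by simp⟩

lemma exists_min_coset (K : Set B) (y : W) :
    ∃ p ∈ par cs K, ∀ q ∈ par cs K, cs.length (y * p) ≤ cs.length (y * q) := by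
  classical
  have hne : ∃ n, ∃ p ∈ par cs K, cs.length (y * p) = n := ⟨_, 1, one_mem _, rfl⟩
  obtain ⟨p, hp, hpn⟩ := Nat.find_spec hne
  refine ⟨p, hp, fun q hq => ?_⟩
  rw [hpn]
  exact Nat.find_min' hne ⟨q, hq, rfl⟩

lemma length_add (K : Set B) (v : W) (hv : ∀ q ∈ par cs K, cs.length v ≤ cs.length (v * q))
    (κ : List B) (hκ : ∀ k ∈ κ, k ∈ K)
    (hmin : ∀ κ' : List B, (∀ k ∈ κ', k ∈ K) → cs.wordProd κ' = cs.wordProd κ →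
      κ.length ≤ κ'.length) :
    cs.length (v * cs.wordProd κ) = cs.length v + κ.length := by
  induction κ using List.reverseRecOn with
  | nil => simp
  | append_singleton κ i ih =>
    have hκ0 : ∀ k ∈ κ, k ∈ K := fun k hk => hκ k (by simp [hk])
    have hi : i ∈ K := hκ i (by simp)
    have ih' := ih hκ0 (by
      intro κ' h1 h2
      have := hmin (κ' ++ [i]) (by
        intro k hk
        rcases List.mem_append.1 hk with hk | hk
        · exact h1 k hk
        · rw [List.mem_singleton.1 hk]; exact hi) (by simp [wordProd_append, h2])
      simpa using this)
    rw [wordProd_append, wordProd_singleton, ← mul_assoc]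
    rcases cs.length_mul_simple (v * cs.wordProd κ) i with h | h
    · rw [h, ih']; simp; ring
    · exfalso
      obtain ⟨ω, hω, rfl⟩ := cs.exists_isReduced v
      rw [← wordProd_append] at h
      obtain ⟨j, hj, hje⟩ := exchange cs (ω ++ κ) i (by omega)
      rcases lt_or_ge j ω.length with hjl | hjl
      · rw [List.eraseIdx_append_of_lt_length hjl, wordProd_append, wordProd_append] at hje
        have h1 : cs.wordProd (ω.eraseIdx j) =
            cs.wordProd ω * (cs.wordProd κ * cs.simple i * (cs.wordProd κ)⁻¹) := by
          rw [eq_comm, ← mul_assoc, ← mul_assoc, mul_inv_eq_iff_eq_mul, hje]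
        have h2 := hv (cs.wordProd κ * cs.simple i * (cs.wordProd κ)⁻¹)
          (mul_mem (mul_mem (wordProd_mem_par cs hκ0) (simple_mem_par cs hi))
            (inv_mem (wordProd_mem_par cs hκ0)))
        rw [← h1, hω.eq] at h2
        have h3 := cs.length_wordProd_le (ω.eraseIdx j)
        rw [List.length_eraseIdx_of_lt hjl] at h3
        omega
      · rw [List.eraseIdx_append_of_length_le hjl, wordProd_append, wordProd_append, mul_assoc,
          mul_left_cancel_iff] at hje
        have h2 := hmin (κ.eraseIdx (j - ω.length))
          (fun k hk => hκ0 k (List.mem_of_mem_eraseIdx hk)) (by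
            rw [← hje, wordProd_append, wordProd_singleton])
        have h3 := List.length_eraseIdx_le κ (j - ω.length)
        simp at h2
        omega

lemma short_of_min (K : Set B) (v : W) (hv : ∀ q ∈ par cs K, cs.length v ≤ cs.length (v * q))
    (x : W) (hx : x ∈ par cs K) (hlen : cs.length (v * x) ≤ cs.length v + 1) :
    x = 1 ∨ ∃ k ∈ K, x = cs.simple k := by
  classical
  have hne : ∃ n, ∃ κ : List B, (∀ k ∈ κ, k ∈ K) ∧ cs.wordProd κ = x ∧ κ.length = n := by
    obtain ⟨κ, h1, h2⟩ := exists_word_of_mem_par cs hx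
    exact ⟨_, κ, h1, h2, rfl⟩
  obtain ⟨κ, h1, rfl, h3⟩ := Nat.find_spec hne
  have := length_add cs K v hv κ h1 (by
    intro κ' h4 h5
    rw [h3]
    exact Nat.find_min' hne ⟨κ', h4, h5, rfl⟩)
  rcases κ with _ | ⟨k, _ | ⟨k', κ⟩⟩
  · left; simp
  · right; exact ⟨k, h1 k (by simp), by simp⟩
  · exfalso
    simp only [List.length_cons] at this
    omega

/-- Key lemma: a simple reflection lying in a conjugate of a standard parabolic, seen from the
minimal coset representative, is conjugate to a simple one. -/
lemma simple_conj (K : Set B) (v : W) (hv : ∀ q ∈ par cs K, cs.length v ≤ cs.length (v * q))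
    (i : B) (hx : v⁻¹ * cs.simple i * v ∈ par cs K) :
    ∃ k ∈ K, v⁻¹ * cs.simple i * v = cs.simple k := by
  rcases short_of_min cs K v hv _ hx (by
    rw [show v * (v⁻¹ * cs.simple i * v) = cs.simple i * v by group]
    rcases cs.length_simple_mul v i with h | h <;> omega) with h | h
  · exfalso
    have h1 : cs.simple i = 1 := by
      have : cs.simple i = v * (v⁻¹ * cs.simple i * v) * v⁻¹ := by group
      rw [this, h]; group
    have := cs.length_simple i
    rw [h1, length_one] at this
    omega
  · exact h

lemma mem_par_of_eta {K : Set B} {p : W} (hp : p ∈ par cs K) :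
    ∀ x : W, eta cs p x ≠ 0 → x ∈ par cs K := by
  classical
  refine Subgroup.closure_induction
    (p := fun p _ => ∀ x : W, eta cs p x ≠ 0 → x ∈ par cs K) ?_ ?_ ?_ ?_ hp
  · rintro _ ⟨k, hk, rfl⟩ x hx
    rw [eta_simple] at hx
    have : x = cs.simple k := by
      by_contra h
      rw [if_neg h] at hx
      exact hx rfl
    rw [this]; exact simple_mem_par cs hk
  · intro x hx
    exact absurd (eta_one cs x) hx
  · intro a b ha hb iha ihb x hx
    rw [eta_mul] at hx
    by_cases h : eta cs a x = 0
    · rw [h, zero_add] at hx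
      have h1 := ihb _ hx
      have : x = a * (a⁻¹ * x * a) * a⁻¹ := by group
      rw [this]
      exact mul_mem (mul_mem ha h1) (inv_mem ha)
    · exact iha x h
  · intro a ha iha x hx
    rw [eta_inv] at hx
    have h1 := iha _ hx
    have : x = a⁻¹ * (a * x * a⁻¹) * a := by group
    rw [this]
    exact mul_mem (mul_mem (inv_mem ha) h1) ha

lemma mem_conj_par {K : Set B} {w p t : W} (hp : p ∈ par cs K)
    (h : eta cs (w * p) t ≠ eta cs w t) : w⁻¹ * t * w ∈ par cs K := by
  refine mem_par_of_eta cs hp _ fun h0 => h ?_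
  rw [eta_mul, h0, add_zero]

/-- Walls are connected through rank two residues. -/
lemma wall_connected {t t' : W} (n : ℕ) : ∀ (w w' : W) (i i' : B),
    cs.length (w⁻¹ * w') = n → t = w * cs.simple i * w⁻¹ → t = w' * cs.simple i' * w'⁻¹ →
    eta cs w t' ≠ eta cs w' t' →
    ∃ (u : W) (j k : B), u⁻¹ * t * u ∈ par cs {j, k} ∧ u⁻¹ * t' * u ∈ par cs {j, k} := by
  induction n using Nat.strong_induction_on with
  | _ n ih =>
    intro w w' i i' hn ht ht' hne
    have hv1 : w⁻¹ * w' ≠ 1 := by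
      intro h
      apply hne
      rw [inv_mul_eq_one.1 h]
    obtain ⟨i₁, hi₁⟩ := cs.exists_leftDescent_of_ne_one hv1
    set v := w⁻¹ * w' with hv
    obtain ⟨p, hp, hmin⟩ := exists_min_coset cs {i, i₁} v⁻¹
    have hsi : cs.simple i ∈ par cs {i, i₁} := simple_mem_par cs (by simp)
    have hsi₁ : cs.simple i₁ ∈ par cs {i, i₁} := simple_mem_par cs (by simp)
    by_cases hsep : eta cs (w * p) t' = eta cs w t'
    · have hconj : (v⁻¹ * p)⁻¹ * cs.simple i' * (v⁻¹ * p) = p⁻¹ * cs.simple i * p := by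
        have h1 : cs.simple i = w⁻¹ * t * w := by rw [ht]; group
        have h2 : cs.simple i' = w'⁻¹ * t * w' := by rw [ht']; group
        rw [h1, h2, hv]; group
      obtain ⟨k, hk, hke⟩ := simple_conj cs {i, i₁} (v⁻¹ * p) (by
        intro q hq
        rw [mul_assoc]
        exact hmin _ (mul_mem hp hq)) i' (by
          rw [hconj]; exact mul_mem (mul_mem (inv_mem hp) hsi) hp)
      rw [hconj] at hke
      refine ih (cs.length ((w * p)⁻¹ * w')) ?_ (w * p) w' k i' rfl ?_ ht' ?_
      · have h1 := hmin _ hsi₁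
        have h2 : (w * p)⁻¹ * w' = (v⁻¹ * p)⁻¹ := by rw [hv]; group
        have h3 : v⁻¹ * cs.simple i₁ = (cs.simple i₁ * v)⁻¹ := by simp
        rw [h2, length_inv]
        rw [h3, length_inv] at h1
        rw [IsLeftDescent] at hi₁
        omega
      · rw [← hke, ht]; group
      · rw [hsep]; exact hne
    · refine ⟨w, i, i₁, ?_, mem_conj_par cs hp hsep⟩
      rw [show w⁻¹ * t * w = cs.simple i by rw [ht]; group]
      exact hsi

lemma zmod2_ne {a b : ZMod 2} (h : a ≠ b) : a = b + 1 := by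
  revert a b; decide

lemma zmod2_add (a : ZMod 2) : a + 1 + 1 = a := by
  revert a; decide

lemma zmod2_succ_ne (a : ZMod 2) : a + 1 ≠ a := by
  revert a; decide

/-- If `t ≠ t'` generate a finite group all four quadrants are nonempty. -/
lemma quadrants {t t' : W} (ht : cs.IsReflection t) (ht' : cs.IsReflection t') (hne : t ≠ t')
    (hfin : IsOfFinOrder (t' * t)) (a a' : ZMod 2) :
    ∃ w, eta cs w t = a ∧ eta cs w t' = a' := by
  by_contra hcon
  push Not at hcon
  have hstep : ∀ w, eta cs w t' = a' → eta cs (t' * t * w) t' = a' := by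
    intro w hw
    have h1 : eta cs w t = a + 1 := zmod2_ne fun h => hcon w h hw
    have h2 : eta cs (t * w) t = a := by rw [eta_refl_mul cs ht, h1, zmod2_add]
    have h3 := zmod2_ne (hcon _ h2)
    rw [mul_assoc, eta_refl_mul cs ht', h3, zmod2_add]
  have hpow : ∀ n : ℕ, ∀ w, eta cs w t' = a' → eta cs ((t' * t) ^ n * w) t' = a' := by
    intro n
    induction n with
    | zero => intro w hw; simpa using hw
    | succ n ih =>
      intro w hw
      rw [pow_succ', mul_assoc]
      exact hstep _ (ih w hw)
  obtain ⟨n, hn, hn1⟩ := isOfFinOrder_iff_pow_eq_one.1 hfin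
  have hinv : (t' * t) ^ (n - 1) = t * t' := by
    have h1 : (t' * t) ^ (n - 1) * (t' * t) = 1 := by
      rw [← pow_succ, Nat.sub_add_cancel hn, hn1]
    rw [eq_inv_of_mul_eq_one_left h1, mul_inv_rev, ht.inv, ht'.inv]
  have hiff : ∀ w, eta cs w t' = a' + 1 → eta cs w t = a := by
    intro w hw
    have h1 : eta cs (t' * w) t' = a' := by rw [eta_refl_mul cs ht', hw, zmod2_add]
    have h2 := hpow (n - 1) _ h1
    rw [hinv, show t * t' * (t' * w) = t * (t' * t') * w by group, ht'.mul_self, mul_one] at h2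
    have h3 : eta cs (t * w) t = a + 1 := zmod2_ne fun h => hcon _ h h2
    rw [eta_refl_mul cs ht] at h3
    exact add_right_cancel h3
  obtain ⟨u, i, hu⟩ := id ht
  have h1 : eta cs (u * cs.simple i) t = eta cs u t + 1 := by
    classical
    rw [eta_mul_simple, if_pos hu]
  apply hne
  rw [hu, eq_comm]
  apply eta_mul_simple_ne cs
  intro h2
  by_cases h3 : eta cs u t' = a'
  · have h4 : eta cs u t = a + 1 := zmod2_ne fun h => hcon _ h h3
    have h5 : eta cs (u * cs.simple i) t = a + 1 :=
      zmod2_ne fun h => hcon _ h (h2.trans h3)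
    rw [h1, h4] at h5
    exact zmod2_succ_ne _ h5
  · have h4 := hiff _ (zmod2_ne h3)
    have h5 := hiff (u * cs.simple i) (zmod2_ne (by rw [h2]; exact h3))
    rw [h1, h4] at h5
    exact zmod2_succ_ne _ h5

/-- The wall of `t` has a panel on each side of the wall of `t'`. -/
lemma exists_panel {t t' : W} (ht : cs.IsReflection t) (ht' : cs.IsReflection t') (hne : t ≠ t')
    (hfin : IsOfFinOrder (t' * t)) (a' : ZMod 2) :
    ∃ (x : W) (i : B), t = x * cs.simple i * x⁻¹ ∧ eta cs x t' = a' := by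
  classical
  obtain ⟨w₁, h1, h1'⟩ := quadrants cs ht ht' hne hfin 0 a'
  obtain ⟨w₂, h2, h2'⟩ := quadrants cs ht ht' hne hfin 1 a'
  by_contra hcon
  push Not at hcon
  let φ : W → W := fun w => if eta cs w t' = a' then w else t' * w
  have hφ : ∀ w, eta cs (φ w) t' = a' := by
    intro w
    by_cases h : eta cs w t' = a'
    · simp [φ, h]
    · simp only [φ, if_neg h]
      rw [eta_refl_mul cs ht', zmod2_ne h, zmod2_add]
  have hstep : ∀ (y : W) (i : B), eta cs (φ (y * cs.simple i)) t = eta cs (φ y) t := by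
    intro y i
    by_cases h : eta cs (y * cs.simple i) t' = eta cs y t'
    · have : φ (y * cs.simple i) = φ y * cs.simple i := by
        simp only [φ, h]
        split_ifs <;> simp [mul_assoc]
      rw [this]
      by_contra h3
      exact hcon _ i (eta_mul_simple_ne cs h3) (hφ y)
    · have h3 := eta_mul_simple_ne cs h
      have h4 : t' * y = y * cs.simple i := by rw [h3]; group
      have h5 : t' * (y * cs.simple i) = y := by
        rw [← h4, ← mul_assoc, ht'.mul_self, one_mul]
      have h6 := zmod2_ne h
      have : φ (y * cs.simple i) = φ y := by
        by_cases h7 : eta cs y t' = a'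
        · simp only [φ, h6, h7, if_neg (zmod2_succ_ne a'), h5, if_true]
        · have h8 : eta cs (y * cs.simple i) t' = a' := by
            rw [h6, zmod2_ne h7, zmod2_add]
          simp only [φ, if_pos h8, if_neg h7, h4]
      rw [this]
  have hall : ∀ z, eta cs (φ (w₁ * z)) t = 0 := by
    intro z
    refine cs.simple_induction_right (p := fun z => eta cs (φ (w₁ * z)) t = 0) z ?_ ?_
    · simp [φ, h1', h1]
    · intro z i hz
      rw [← mul_assoc, hstep]
      exact hz
  have := hall (w₁⁻¹ * w₂)
  rw [mul_inv_cancel_left] at this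
  simp only [φ, if_pos h2', h2] at this
  exact one_ne_zero this

/-- Two distinct reflections whose product has finite order lie in a common rank two parabolic. -/
lemma rank_two {t t' : W} (ht : cs.IsReflection t) (ht' : cs.IsReflection t') (hne : t ≠ t')
    (hfin : IsOfFinOrder (t' * t)) :
    ∃ (u : W) (j k : B), u⁻¹ * t * u ∈ par cs {j, k} ∧ u⁻¹ * t' * u ∈ par cs {j, k} := by
  obtain ⟨x, i, h1, h2⟩ := exists_panel cs ht ht' hne hfin 0
  obtain ⟨x', i', h1', h2'⟩ := exists_panel cs ht ht' hne hfin 1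
  exact wall_connected cs _ x x' i i' rfl h1 h1' (by rw [h2, h2']; exact zero_ne_one)

end Parabolic

section Final

variable {B W : Type*} [Group W] {M : CoxeterMatrix B} (cs : CoxeterSystem M W)

lemma dihedral_form (j k : B) {x : W} (hx : x ∈ par cs {j, k}) :
    ∃ n : ℤ, x = (cs.simple j * cs.simple k) ^ n ∨
      x = (cs.simple j * cs.simple k) ^ n * cs.simple j := by
  have hc : ∀ n : ℤ, cs.simple j * (cs.simple j * cs.simple k) ^ n
      = (cs.simple j * cs.simple k) ^ (-n) * cs.simple j := by
    intro n
    have h1 : (cs.simple j * (cs.simple j * cs.simple k) * (cs.simple j)⁻¹) ^ n =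
      cs.simple j * (cs.simple j * cs.simple k) ^ n * (cs.simple j)⁻¹ := conj_zpow
    have h2 : cs.simple j * (cs.simple j * cs.simple k) * (cs.simple j)⁻¹ =
        (cs.simple j * cs.simple k)⁻¹ := by simp
    rw [h2, inv_zpow', eq_mul_inv_iff_mul_eq] at h1
    exact h1.symm
  have hjn : ∀ y : W, (∃ n : ℤ, y = (cs.simple j * cs.simple k) ^ n ∨
      y = (cs.simple j * cs.simple k) ^ n * cs.simple j) →
      ∃ n : ℤ, cs.simple j * y = (cs.simple j * cs.simple k) ^ n ∨
      cs.simple j * y = (cs.simple j * cs.simple k) ^ n * cs.simple j := by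
    rintro y ⟨n, rfl | rfl⟩
    · exact ⟨-n, Or.inr (hc n)⟩
    · refine ⟨-n, Or.inl ?_⟩
      rw [← mul_assoc, hc]; simp
  obtain ⟨κ, hκ, rfl⟩ := exists_word_of_mem_par cs hx
  clear hx
  induction κ with
  | nil => exact ⟨0, by simp⟩
  | cons i κ ih =>
    have ih' := ih fun a ha => hκ a (by simp [ha])
    rw [wordProd_cons]
    rcases hκ i (by simp) with rfl | hi
    · exact hjn _ ih'
    · rw [Set.mem_singleton_iff] at hi
      have hkx : cs.simple i * cs.wordProd κ =
          cs.simple j * (cs.simple j * cs.simple k * cs.wordProd κ) := by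
        rw [hi]; simp [mul_assoc]
      rw [hkx]
      refine hjn _ ?_
      obtain ⟨n, h | h⟩ := ih'
      · exact ⟨1 + n, Or.inl (by rw [h, zpow_one_add])⟩
      · exact ⟨1 + n, Or.inr (by rw [h, zpow_one_add]; simp only [mul_assoc])⟩

lemma par_finite (j k : B) {t t' : W} (ht : cs.IsReflection t) (ht' : cs.IsReflection t')
    (hne : t ≠ t') (hfin : IsOfFinOrder (t' * t)) (h : t ∈ par cs {j, k})
    (h' : t' ∈ par cs {j, k}) : (par cs {j, k} : Set W).Finite := by
  have hodd : ∀ x : W, cs.IsReflection x → x ∈ par cs {j, k} →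
      ∃ n : ℤ, x = (cs.simple j * cs.simple k) ^ n * cs.simple j := by
    intro x hx hxm
    obtain ⟨n, h | h⟩ := dihedral_form cs j k hxm
    · exfalso
      obtain ⟨u, i, hu⟩ := hx
      have h1 : cs.lengthParity x = Multiplicative.ofAdd 1 := by
        rw [hu, map_mul, map_mul, lengthParity_simple, map_inv]
        rw [mul_inv_eq_iff_eq_mul, mul_comm]
      have h2 : cs.lengthParity x = 1 := by
        rw [h, map_zpow, map_mul, lengthParity_simple, lengthParity_simple]
        rw [show (Multiplicative.ofAdd (1 : ZMod 2)) * Multiplicative.ofAdd (1 : ZMod 2) = 1 from by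
          decide, one_zpow]
      rw [h1] at h2
      exact absurd h2 (by decide)
    · exact ⟨n, h⟩
  obtain ⟨n, hn⟩ := hodd t ht h
  obtain ⟨m, hm⟩ := hodd t' ht' h'
  have hmn : m - n ≠ 0 := by
    intro h0
    apply hne
    rw [hn, hm, sub_eq_zero.1 h0]
  have hprod : t' * t = (cs.simple j * cs.simple k) ^ (m - n) := by
    rw [← ht.inv, hn, hm, mul_inv_rev, zpow_sub]; group
  rw [hprod] at hfin
  have hc : IsOfFinOrder (cs.simple j * cs.simple k) := by
    obtain ⟨N, hN, hN1⟩ := isOfFinOrder_iff_pow_eq_one.1 hfin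
    rw [isOfFinOrder_iff_zpow_eq_one]
    refine ⟨(m - n) * N, mul_ne_zero hmn (by exact_mod_cast hN.ne'), ?_⟩
    rw [zpow_mul, zpow_natCast, hN1]
  have hz := finite_zpowers.2 hc
  refine (hz.union (hz.image (· * cs.simple j))).subset ?_
  intro x hx
  obtain ⟨n, h | h⟩ := dihedral_form cs j k hx
  · left; exact ⟨n, h.symm⟩
  · right; exact ⟨_, ⟨n, rfl⟩, h.symm⟩

lemma isConj_of_odd (i j : B) (hodd : Odd (M i j)) : IsConj (cs.simple i) (cs.simple j) := by
  obtain ⟨k, hk⟩ := hodd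
  have hc : ∀ n : ℕ, cs.simple j * (cs.simple i * cs.simple j) ^ n
      = ((cs.simple i * cs.simple j) ^ n)⁻¹ * cs.simple j := by
    intro n
    induction n with
    | zero => simp
    | succ n ihn =>
      rw [pow_succ, mul_inv_rev, mul_assoc _ _ (cs.simple j), ← ihn, ← pow_succ, pow_succ']
      simp [mul_assoc]
  have h := cs.simple_mul_simple_pow i j
  rw [hk] at h
  rw [isConj_iff]
  refine ⟨(cs.simple i * cs.simple j) ^ k, ?_⟩
  rw [mul_inv_eq_iff_eq_mul, hc, eq_inv_mul_iff_mul_eq]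
  rw [show 2 * k + 1 = k + k + 1 by ring, pow_succ, pow_add] at h
  have h2 : (cs.simple i * cs.simple j) ^ k * (cs.simple i * cs.simple j) ^ k * cs.simple i
      = cs.simple j := by
    rw [← mul_assoc] at h
    have := eq_inv_of_mul_eq_one_left h
    rw [inv_simple] at this
    exact this
  rw [← mul_assoc, h2]

/-- If every element of a generating set is conjugate to a simple reflection, then every
simple reflection is conjugate to an element of that set. -/
lemma exists_conj (S : Set W) (hgen : Subgroup.closure S = ⊤)
    (hS : ∀ s ∈ S, ∃ j, IsConj s (cs.simple j)) (i : B) : ∃ s ∈ S, IsConj s (cs.simple i) := by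
  classical
  by_contra hcon
  push Not at hcon
  let f : B → ℤˣ := fun j => if IsConj (cs.simple i) (cs.simple j) then -1 else 1
  have hf : M.IsLiftable f := by
    intro j k
    by_cases hjk : f j = f k
    · rw [hjk, Int.units_mul_self, one_pow]
    · have hev : Even (M j k) := by
        rw [← Nat.not_odd_iff_even]
        intro ho
        have hconj := isConj_of_odd cs j k ho
        apply hjk
        have : IsConj (cs.simple i) (cs.simple j) ↔ IsConj (cs.simple i) (cs.simple k) :=
          ⟨fun h => h.trans hconj, fun h => h.trans hconj.symm⟩
        simp only [f, this]
      obtain ⟨n, hn⟩ := hev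
      rw [hn, ← two_mul, pow_mul, sq, Int.units_mul_self, one_pow]
  let χ : W →* ℤˣ := cs.lift ⟨f, hf⟩
  have hχ : ∀ j, χ (cs.simple j) = f j := fun j => cs.lift_apply_simple hf j
  have hker : Subgroup.closure S ≤ χ.ker := by
    rw [Subgroup.closure_le]
    intro s hs
    obtain ⟨j, hj⟩ := hS s hs
    have h1 : ¬ IsConj (cs.simple i) (cs.simple j) := fun h => hcon s hs (hj.trans h.symm)
    change χ s = 1
    have h2 : χ s = χ (cs.simple j) := isConj_iff_eq.1 (χ.map_isConj hj)
    rw [h2, hχ]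
    simp only [f, if_neg h1]
  rw [hgen] at hker
  have h1 : χ (cs.simple i) = 1 := hker (Subgroup.mem_top _)
  rw [hχ] at h1
  simp only [f, if_pos (IsConj.refl (cs.simple i))] at h1
  exact absurd h1 (by decide)

lemma pair_eq {W : Type*} {a b c d : W} (hab : a ≠ b) (ha : a = c ∨ a = d) (hb : b = c ∨ b = d) :
    ({a, b} : Set W) = {c, d} := by
  rcases ha with rfl | rfl <;> rcases hb with rfl | rfl
  · exact absurd rfl hab
  · rfl
  · exact Set.pair_comm _ _
  · exact absurd rfl hab

end Final

end AngleSymm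

/-- Angle-compatibility of Coxeter generating sets is symmetric. -/
theorem angle_compatibility_symm
    {W : Type*} [Group W] (S R : Set W)
    (hS : IsCoxeterGeneratingSet S) (hR : IsCoxeterGeneratingSet R)
    (h : ∀ s ∈ S, ∀ s' ∈ S, (Subgroup.closure {s, s'} : Set W).Finite →
      ∃ w : W, ∃ r ∈ R, ∃ r' ∈ R, ({w * s * w⁻¹, w * s' * w⁻¹} : Set W) = {r, r'}) :
    ∀ r ∈ R, ∀ r' ∈ R, (Subgroup.closure {r, r'} : Set W).Finite →
      ∃ u : W, ∃ s ∈ S, ∃ s' ∈ S, ({u * r * u⁻¹, u * r' * u⁻¹} : Set W) = {s, s'} := by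
  obtain ⟨_, MS, cS, hcS⟩ := hS
  obtain ⟨_, MR, cR, hcR⟩ := hR
  have hparS : ∀ j k : S, AngleSymm.par cS {j, k} = Subgroup.closure {(j : W), (k : W)} := by
    intro j k
    rw [AngleSymm.par, Set.image_pair, hcS, hcS]
  have hparR : ∀ j k : R, AngleSymm.par cR {j, k} = Subgroup.closure {(j : W), (k : W)} := by
    intro j k
    rw [AngleSymm.par, Set.image_pair, hcR, hcR]
  have hgenS : Subgroup.closure S = ⊤ := by
    have h1 := cS.subgroup_closure_range_simple
    have h2 : Set.range cS.simple = S := by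
      rw [show cS.simple = Subtype.val from funext hcS, Subtype.range_coe]
    rwa [h2] at h1
  -- every element of `S` is conjugate into `R`
  have hSR : ∀ s ∈ S, ∃ j, IsConj s (cR.simple j) := by
    intro s hs
    have hfin : (Subgroup.closure {s, s} : Set W).Finite := by
      have h1 : s * s = 1 := by
        have := cS.simple_mul_simple_self ⟨s, hs⟩
        rwa [hcS] at this
      rw [Set.pair_eq_singleton, ← Subgroup.zpowers_eq_closure]
      exact finite_zpowers.2 (isOfFinOrder_iff_pow_eq_one.2 ⟨2, by norm_num, by rw [sq, h1]⟩)
    obtain ⟨w, r, hr, r', hr', he⟩ := h s hs s hs hfin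
    rw [Set.pair_eq_singleton] at he
    have : r ∈ ({w * s * w⁻¹} : Set W) := by rw [he]; simp
    refine ⟨⟨r, hr⟩, ?_⟩
    rw [hcR, isConj_iff]
    exact ⟨w, this.symm⟩
  have hRS : ∀ r ∈ R, ∃ s ∈ S, IsConj s r := by
    intro r hr
    have := AngleSymm.exists_conj cR S hgenS hSR ⟨r, hr⟩
    rwa [hcR] at this
  have hrefl : ∀ r ∈ R, cS.IsReflection r := by
    intro r hr
    obtain ⟨s, hs, hc⟩ := hRS r hr
    obtain ⟨c, hc⟩ := isConj_iff.1 hc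
    exact ⟨c, ⟨s, hs⟩, by rw [hcS]; exact hc.symm⟩
  intro r hr r' hr' hfin
  by_cases hrr : r = r'
  · subst hrr
    obtain ⟨s, hs, hc⟩ := hRS r hr
    obtain ⟨c, hc⟩ := isConj_iff.1 hc.symm
    exact ⟨c, s, hs, s, hs, by rw [hc]⟩
  have hord : IsOfFinOrder (r' * r) := by
    have : Finite (Subgroup.closure {r, r'}) := hfin
    have hm : r' * r ∈ Subgroup.closure {r, r'} :=
      mul_mem (Subgroup.subset_closure (by simp)) (Subgroup.subset_closure (by simp))
    have h1 := isOfFinOrder_of_finite (⟨r' * r, hm⟩ : Subgroup.closure {r, r'})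
    exact MonoidHom.isOfFinOrder (Subgroup.closure {r, r'}).subtype h1
  obtain ⟨u, j, k, h1, h2⟩ := AngleSymm.rank_two cS (hrefl r hr) (hrefl r' hr') hrr hord
  have hfinP : (AngleSymm.par cS {j, k} : Set W).Finite := by
    refine AngleSymm.par_finite cS j k (t := u⁻¹ * r * u) (t' := u⁻¹ * r' * u) ?_ ?_ ?_ ?_ h1 h2
    · simpa using (hrefl r hr).conj u⁻¹
    · simpa using (hrefl r' hr').conj u⁻¹
    · intro he
      exact hrr (mul_left_cancel (mul_right_cancel he))
    · obtain ⟨N, hN, hN1⟩ := isOfFinOrder_iff_pow_eq_one.1 hord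
      refine isOfFinOrder_iff_pow_eq_one.2 ⟨N, hN, ?_⟩
      rw [show u⁻¹ * r' * u * (u⁻¹ * r * u) = u⁻¹ * (r' * r) * u⁻¹⁻¹ by group, conj_pow, hN1]
      group
  rw [hparS] at hfinP h1 h2
  obtain ⟨w, r₁, hr₁, r₁', hr₁', he⟩ := h j j.2 k k.2 hfinP
  -- transport to `R`
  have htr : ∀ x, x ∈ Subgroup.closure {(j : W), (k : W)} →
      w * x * w⁻¹ ∈ AngleSymm.par cR {⟨r₁, hr₁⟩, ⟨r₁', hr₁'⟩} := by
    intro x hx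
    rw [hparR]
    change w * x * w⁻¹ ∈ Subgroup.closure {r₁, r₁'}
    rw [← he]
    have h3 : (MulAut.conj w).toMonoidHom x ∈
        (Subgroup.closure {(j : W), (k : W)}).map (MulAut.conj w).toMonoidHom :=
      Subgroup.mem_map_of_mem _ hx
    rw [MonoidHom.map_closure, Set.image_pair] at h3
    simpa using h3
  obtain ⟨p, hp, hmin⟩ := AngleSymm.exists_min_coset cR {⟨r₁, hr₁⟩, ⟨r₁', hr₁'⟩} (u * w⁻¹)
  have hfinal : ∀ q (hq : q ∈ R), u⁻¹ * q * u ∈ Subgroup.closure {(j : W), (k : W)} →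
      (u * w⁻¹ * p)⁻¹ * q * (u * w⁻¹ * p) = r₁ ∨ (u * w⁻¹ * p)⁻¹ * q * (u * w⁻¹ * p) = r₁' := by
    intro q hq hm
    obtain ⟨l, hl, hle⟩ := AngleSymm.simple_conj cR {⟨r₁, hr₁⟩, ⟨r₁', hr₁'⟩} (u * w⁻¹ * p) (by
      intro z hz
      rw [mul_assoc _ p z]
      exact hmin _ (mul_mem hp hz)) ⟨q, hq⟩ (by
        rw [hcR]
        have := mul_mem (mul_mem (inv_mem hp) (htr _ hm)) hp
        convert this using 1
        group)
    rw [hcR, hcR] at hle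
    rcases hl with rfl | hl
    · exact Or.inl hle
    · rw [Set.mem_singleton_iff] at hl
      rw [hl] at hle
      exact Or.inr hle
  have hpair : ({(u * w⁻¹ * p)⁻¹ * r * (u * w⁻¹ * p), (u * w⁻¹ * p)⁻¹ * r' * (u * w⁻¹ * p)} : Set W)
      = {r₁, r₁'} := by
    refine AngleSymm.pair_eq ?_ (hfinal r hr h1) (hfinal r' hr' h2)
    intro he
    exact hrr (mul_left_cancel (mul_right_cancel he))
  rw [← he] at hpair
  refine ⟨w⁻¹ * (u * w⁻¹ * p)⁻¹, j, j.2, k, k.2, ?_⟩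
  have himg := congrArg (fun A : Set W => (fun x => w⁻¹ * x * w) '' A) hpair
  simp only [Set.image_pair] at himg
  convert himg using 2
  · group
  · congr 1; group
  · group
  · congr 1; group
end
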